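/- arXiv:cs/0610159 — 3 statements merged into one kernel-verified Lean document; each statement's English description precedes it below -/
import Mathlib

section
/- Let f be a Boolean function on m variables of Hamming weight M with M ≤ 2^(m-1). Then the complementary set of f equals the set of those a ∈ F_2^m whose autocorrelation value is 2^m − 4M, i.e. Cset_f = { a ∈ F_2^m : r_f(a) = 2^m − 4M }. -/
/-- For a Boolean function `f` on `m` variables of Hamming weight
`M ≤ 2^(m-1)`, the complementary set of `f` equals the set of `a ∈ F_2^m`
whose autocorrelation value is `2^m − 4M`. -/
theorem cset_eq_autocorrelation_level_set
    (m : ℕ) (f : (Fin m → ZMod 2) → ZMod 2)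
    (M : ℕ) (hM : M = (Finset.univ.filter fun v => f v = 1).card)
    (hle : M ≤ 2 ^ (m - 1)) :
    {a : Fin m → ZMod 2 | ∀ v, f v * f (v + a) = 0} =
      {a : Fin m → ZMod 2 |
        (∑ v : Fin m → ZMod 2, (-1 : ℤ) ^ ((f v).val + (f (v + a)).val)) =
          2 ^ m - 4 * M} := by
  have key : ∀ x y : ZMod 2, (-1 : ℤ) ^ (x.val + y.val) =
      1 - 2 * (if x = 1 then 1 else 0) - 2 * (if y = 1 then 1 else 0)
        + 4 * (if x * y = 0 then 0 else 1) := by decide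
  have hs : (∑ v : Fin m → ZMod 2, (if f v = 1 then (1 : ℤ) else 0)) = M := by
    rw [hM, Finset.sum_boole]
  ext a
  have hs' : (∑ v : Fin m → ZMod 2, (if f (v + a) = 1 then (1 : ℤ) else 0)) = M := by
    rw [← hs]
    exact Equiv.sum_comp (Equiv.addRight a) (fun v => if f v = 1 then (1 : ℤ) else 0)
  have hc : (∑ _v : Fin m → ZMod 2, (1 : ℤ)) = 2 ^ m := by
    simp [ZMod.card]
  simp only [Set.mem_ofPred_eq, key, Finset.sum_add_distrib, Finset.sum_sub_distrib,
    ← Finset.mul_sum, hs, hs', hc]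
  have h0 := Finset.sum_eq_zero_iff_of_nonneg (s := (Finset.univ : Finset (Fin m → ZMod 2)))
    (f := fun v => if f v * f (v + a) = 0 then (0 : ℤ) else 1)
    (fun v _ => by split_ifs <;> norm_num)
  constructor
  · intro h
    have := h0.2 (fun v _ => by simp only [h v, if_true])
    linarith
  · intro h v
    have h1 := h0.1 (by linarith) v (Finset.mem_univ v)
    by_contra hv
    simp only [hv, if_false] at h1
    exact one_ne_zero h1
end

section
/- Let y_1, …, y_m ∈ F_2^{2m} be linearly independent over F_2 with pairwise symplectic inner product zero, and write each y_j = (a_j, b_j) with a_j, b_j ∈ F_2^m. Set P_j = (1/2)(I_{2^m} + E_{(a_j,b_j)}). Then P_1, …, P_m are pairwise commuting orthogonal projections, each of rank 2^(m−1), and for every sign pattern (ε_1, …, ε_m) ∈ {+1,−1}^m the product Π_{j=1}^m (1/2)(I_{2^m} + ε_j E_{(a_j,b_j)}) is an orthogonal projection of rank 1. -/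
/-- The Pauli matrix assigned to a pair `(a, b) ∈ F_2 × F_2`:
`I` for `(0,0)`, `X` for `(1,0)`, `Z` for `(0,1)`, `Y` for `(1,1)`,
with `X = [[0,1],[1,0]]`, `Z = [[1,0],[0,−1]]`, `Y = [[0,i],[−i,0]]`. -/
noncomputable def pauliMat (a b : ZMod 2) : Matrix (Fin 2) (Fin 2) ℂ :=
  if a = 0 then
    if b = 0 then 1 else !![1, 0; 0, -1]
  else
    if b = 0 then !![0, 1; 1, 0] else !![0, Complex.I; -Complex.I, 0]

/-- The Heisenberg–Weyl operator `E_{(a,b)} = e_1 ⊗ ⋯ ⊗ e_m ∈ M_{2^m}(ℂ)`. -/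
noncomputable def HW {m : ℕ} (a b : Fin m → ZMod 2) :
    Matrix (Fin m → Fin 2) (Fin m → Fin 2) ℂ :=
  fun x y => ∏ j, pauliMat (a j) (b j) (x j) (y j)

lemma zmod2_cases : ∀ a : ZMod 2, a = 0 ∨ a = 1 := by decide

lemma pauli_mul_aux (a b a' b' : ZMod 2) :
    ∃ c : ℂ, pauliMat a b * pauliMat a' b' = c • pauliMat (a + a') (b + b') := by
  have key : ∀ c : ℂ, (pauliMat a b * pauliMat a' b' = c • pauliMat (a + a') (b + b')) →
    ∃ c : ℂ, pauliMat a b * pauliMat a' b' = c • pauliMat (a + a') (b + b') := fun c h => ⟨c, h⟩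
  have h11 : (1 : ZMod 2) + 1 = 0 := by decide
  obtain rfl | rfl := zmod2_cases a <;> obtain rfl | rfl := zmod2_cases b <;> obtain rfl | rfl := zmod2_cases a' <;> obtain rfl | rfl := zmod2_cases b' <;>
  first
  | (refine key 1 ?_
     ext i j; fin_cases i <;> fin_cases j <;> simp [pauliMat, h11, Matrix.mul_apply]; done)
  | (refine key Complex.I ?_
     ext i j; fin_cases i <;> fin_cases j <;> simp [pauliMat, h11, Matrix.mul_apply]; done)
  | (refine key (-Complex.I) ?_
     ext i j; fin_cases i <;> fin_cases j <;> simp [pauliMat, h11, Matrix.mul_apply]; done)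

lemma pauli_sq (a b : ZMod 2) : pauliMat a b * pauliMat a b = 1 := by
  obtain rfl | rfl := zmod2_cases a <;> obtain rfl | rfl := zmod2_cases b <;>
   (ext i j; fin_cases i <;> fin_cases j <;> simp [pauliMat, Matrix.mul_apply])

lemma pauli_star (a b : ZMod 2) (i j : Fin 2) : star (pauliMat a b j i) = pauliMat a b i j := by
  obtain rfl | rfl := zmod2_cases a <;> obtain rfl | rfl := zmod2_cases b <;> fin_cases i <;> fin_cases j <;> simp [pauliMat]

lemma pauli_trace (a b : ZMod 2) (h : ¬ (a = 0 ∧ b = 0)) : ∑ i, pauliMat a b i i = 0 := by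
  obtain rfl | rfl := zmod2_cases a <;> obtain rfl | rfl := zmod2_cases b <;> simp [pauliMat] at h ⊢

/-- The sign character of `F_2`. -/
noncomputable def sgn2 (a : ZMod 2) : ℂ := if a = 0 then 1 else -1

lemma sgn2_add (a b : ZMod 2) : sgn2 (a + b) = sgn2 a * sgn2 b := by
  have h11 : (1 : ZMod 2) + 1 = 0 := by decide
  obtain rfl | rfl := zmod2_cases a <;> obtain rfl | rfl := zmod2_cases b <;> simp [sgn2, h11]

lemma sgn2_sum {m : ℕ} (f : Fin m → ZMod 2) : ∏ t, sgn2 (f t) = sgn2 (∑ t, f t) := by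
  classical
  induction (Finset.univ : Finset (Fin m)) using Finset.induction_on with
  | empty => simp [sgn2]
  | insert a s ha ih => rw [Finset.prod_insert ha, Finset.sum_insert ha, sgn2_add, ih]

lemma pauli_comm (a b a' b' : ZMod 2) :
    pauliMat a b * pauliMat a' b' = sgn2 (a * b' + a' * b) • (pauliMat a' b' * pauliMat a b) := by
  have h11 : (1 : ZMod 2) + 1 = 0 := by decide
  obtain rfl | rfl := zmod2_cases a <;> obtain rfl | rfl := zmod2_cases b <;> obtain rfl | rfl := zmod2_cases a' <;> obtain rfl | rfl := zmod2_cases b' <;>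
   (ext i j; fin_cases i <;> fin_cases j <;> simp [pauliMat, sgn2, h11, Matrix.mul_apply])

lemma HW_mul_apply {m : ℕ} (a b a' b' : Fin m → ZMod 2) (x z : Fin m → Fin 2) :
    (HW a b * HW a' b') x z = ∏ j, (pauliMat (a j) (b j) * pauliMat (a' j) (b' j)) (x j) (z j) := by
  simp only [Matrix.mul_apply, HW, Finset.prod_univ_sum, Fintype.piFinset_univ,
    Finset.prod_mul_distrib]

lemma HW_mul {m : ℕ} (v w : (Fin m → ZMod 2) × (Fin m → ZMod 2)) :
    ∃ c : ℂ, HW v.1 v.2 * HW w.1 w.2 = c • HW (v + w).1 (v + w).2 := by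
  choose c hc using fun j => pauli_mul_aux (v.1 j) (v.2 j) (w.1 j) (w.2 j)
  refine ⟨∏ j, c j, ?_⟩
  ext x z
  rw [HW_mul_apply]
  simp [hc, HW, Finset.prod_mul_distrib]

lemma one_eq_prod {m : ℕ} (x z : Fin m → Fin 2) :
    (1 : Matrix (Fin m → Fin 2) (Fin m → Fin 2) ℂ) x z
      = ∏ j, (1 : Matrix (Fin 2) (Fin 2) ℂ) (x j) (z j) := by
  simp only [Matrix.one_apply, Finset.prod_ite_zero]
  simp [funext_iff]

lemma HW_zero {m : ℕ} : HW (0 : Fin m → ZMod 2) 0 = 1 := by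
  ext x z
  rw [one_eq_prod]
  simp [HW, pauliMat]

lemma HW_sq {m : ℕ} (a b : Fin m → ZMod 2) : HW a b * HW a b = 1 := by
  ext x z
  rw [HW_mul_apply, one_eq_prod]
  simp [pauli_sq]

lemma HW_herm {m : ℕ} (a b : Fin m → ZMod 2) : (HW a b).IsHermitian := by
  ext x z
  rw [Matrix.conjTranspose_apply]
  simp only [HW, star_prod, pauli_star]

lemma HW_comm {m : ℕ} (a b a' b' : Fin m → ZMod 2)
    (h : ∑ t, (a t * b' t + a' t * b t) = 0) : HW a b * HW a' b' = HW a' b' * HW a b := by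
  ext x z
  rw [HW_mul_apply, HW_mul_apply]
  simp_rw [pauli_comm (a _) (b _) (a' _) (b' _), Matrix.smul_apply, smul_eq_mul,
    Finset.prod_mul_distrib, sgn2_sum, h]
  simp [sgn2]

lemma HW_trace {m : ℕ} (v : (Fin m → ZMod 2) × (Fin m → ZMod 2)) (h : v ≠ 0) :
    (HW v.1 v.2).trace = 0 := by
  have : (HW v.1 v.2).trace = ∏ j, ∑ i, pauliMat (v.1 j) (v.2 j) i i := by
    simp only [Matrix.trace, Matrix.diag_apply, HW, Finset.prod_univ_sum, Fintype.piFinset_univ]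
  rw [this]
  by_contra hne
  rw [Finset.prod_eq_zero_iff] at hne
  push Not at hne
  apply h
  have hj : ∀ j, v.1 j = 0 ∧ v.2 j = 0 := fun j => by
    by_contra h'
    exact hne j (Finset.mem_univ _) (pauli_trace _ _ h')
  ext j
  · exact (hj j).1
  · exact (hj j).2

lemma rank_of_idem {n : Type*} [Fintype n] [DecidableEq n] (Q : Matrix n n ℂ) (h : Q * Q = Q) :
    (Q.rank : ℂ) = Q.trace := by
  have hi : IsIdempotentElem (Matrix.toLin' Q) := by
    rw [IsIdempotentElem, Module.End.mul_eq_comp, ← Matrix.toLin'_mul, h]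
  have ht := (LinearMap.IsIdempotentElem.isProj_range _ hi).trace
  rw [Matrix.trace_toLin'_eq] at ht
  rw [ht]
  rfl

lemma list_proj {n : Type*} [Fintype n] [DecidableEq n] {ι : Type*} (R : ι → Matrix n n ℂ)
    (hc : ∀ i j, R i * R j = R j * R i) (hh : ∀ i, (R i).IsHermitian)
    (hi : ∀ i, R i * R i = R i) (l : List ι) :
    ((l.map R).prod).IsHermitian ∧ (l.map R).prod * (l.map R).prod = (l.map R).prod := by
  induction l with
  | nil => simp
  | cons j l ih =>
    have hcom : Commute (R j) (l.map R).prod := by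
      apply Commute.list_prod_right
      intro x hx
      obtain ⟨i, _, rfl⟩ := List.mem_map.1 hx
      exact hc _ _
    simp only [List.map_cons, List.prod_cons]
    constructor
    · exact ((hh j).commute_iff ih.1).1 hcom
    · rw [hcom.symm.mul_mul_mul_comm, hi, ih.2]

lemma trace_list {m : ℕ} (y : Fin m → (Fin m → ZMod 2) × (Fin m → ZMod 2)) (ε : Fin m → ℂ)
    (l : List (Fin m)) :
    ∀ v, v ∉ Submodule.span (ZMod 2) (y '' {j | j ∈ l}) →
    (HW v.1 v.2 * (l.map fun j => (1 / 2 : ℂ) • (1 + ε j • HW (y j).1 (y j).2)).prod).trace = 0 := by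
  induction l with
  | nil =>
    intro v hv
    have : v ≠ 0 := by rintro rfl; exact hv (Submodule.zero_mem _)
    simp [HW_trace v this]
  | cons j l ih =>
    intro v hv
    have hsub : Submodule.span (ZMod 2) (y '' {i | i ∈ l}) ≤
        Submodule.span (ZMod 2) (y '' {i | i ∈ j :: l}) :=
      Submodule.span_mono (Set.image_mono fun i hi => List.mem_cons_of_mem _ hi)
    have hj : y j ∈ Submodule.span (ZMod 2) (y '' {i | i ∈ j :: l}) :=
      Submodule.subset_span ⟨j, by simp, rfl⟩
    have h1 := ih v (fun h => hv (hsub h))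
    have h2 := ih (v + y j) (fun h => hv ((Submodule.add_mem_iff_left _ hj).1 (hsub h)))
    obtain ⟨c, hc⟩ := HW_mul v (y j)
    simp only [List.map_cons, List.prod_cons]
    rw [← mul_assoc, mul_smul_comm, mul_add, mul_one, mul_smul_comm, hc, smul_mul_assoc, add_mul,
      smul_mul_assoc, smul_mul_assoc, Matrix.trace_smul, Matrix.trace_add, Matrix.trace_smul,
      Matrix.trace_smul, h1, h2]
    simp

lemma trace_prod {m : ℕ} (y : Fin m → (Fin m → ZMod 2) × (Fin m → ZMod 2))
    (hind : LinearIndependent (ZMod 2) y) (ε : Fin m → ℂ)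
    (l : List (Fin m)) (hl : l.Nodup) :
    ((l.map fun j => (1 / 2 : ℂ) • (1 + ε j • HW (y j).1 (y j).2)).prod).trace
      = (1 / 2) ^ l.length * 2 ^ m := by
  induction l with
  | nil => simp
  | cons j l ih =>
    rw [List.nodup_cons] at hl
    have h1 := ih hl.2
    have h2 := trace_list y ε l (y j) (hind.notMem_span_image hl.1)
    simp only [List.map_cons, List.prod_cons]
    rw [smul_mul_assoc, add_mul, one_mul,
      smul_mul_assoc, Matrix.trace_smul, Matrix.trace_add, Matrix.trace_smul, h1, h2]
    simp [pow_succ]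
    ring

lemma half_proj {m : ℕ} (a b : Fin m → ZMod 2) (e : ℂ) (he : e = 1 ∨ e = -1) :
    ((1 / 2 : ℂ) • (1 + e • HW a b)).IsHermitian ∧
    ((1 / 2 : ℂ) • (1 + e • HW a b)) * ((1 / 2 : ℂ) • (1 + e • HW a b))
      = (1 / 2 : ℂ) • (1 + e • HW a b) := by
  constructor
  · have hs : star e = e := by rcases he with rfl | rfl <;> simp
    rw [Matrix.IsHermitian, Matrix.conjTranspose_smul, Matrix.conjTranspose_add,
      Matrix.conjTranspose_smul, hs, (HW_herm a b).eq]
    simp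
  · have h2 : e * e = 1 := by rcases he with rfl | rfl <;> simp
    rw [smul_mul_assoc, mul_smul_comm, add_mul, mul_add, mul_add, smul_mul_assoc, smul_mul_assoc,
      mul_smul_comm, mul_smul_comm, HW_sq, smul_smul e e, h2]
    simp only [one_mul, mul_one, one_smul]
    module

lemma half_comm {n : Type*} [Fintype n] [DecidableEq n] (A B : Matrix n n ℂ) (e f : ℂ)
    (h : A * B = B * A) :
    ((1 / 2 : ℂ) • (1 + e • A)) * ((1 / 2 : ℂ) • (1 + f • B))
      = ((1 / 2 : ℂ) • (1 + f • B)) * ((1 / 2 : ℂ) • (1 + e • A)) := by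
  have h' : Commute A B := h
  have h1 : Commute (1 + e • A) (1 + f • B) :=
    (Commute.one_left _).add_left
      ((Commute.one_right _).add_right ((h'.smul_left e).smul_right f))
  exact (h1.smul_left _).smul_right _

/-- given `y_1, …, y_m ∈ F_2^{2m}` (each written `y_j = (a_j, b_j)`)
linearly independent over `F_2` with pairwise symplectic inner product zero, the
matrices `P_j = (1/2)(I + E_{y_j})` are pairwise commuting orthogonal projections
of rank `2^(m−1)`, and for every sign pattern `ε ∈ {±1}^m` the product
`Π_j (1/2)(I + ε_j E_{y_j})` is an orthogonal projection of rank `1`. -/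
theorem commuting_projections_from_isotropic_rows
    (m : ℕ) (y : Fin m → (Fin m → ZMod 2) × (Fin m → ZMod 2))
    (hind : LinearIndependent (ZMod 2) y)
    (hsymp : ∀ i j, i ≠ j →
      (∑ t, ((y i).1 t * (y j).2 t + (y j).1 t * (y i).2 t)) = 0)
    (P : Fin m → Matrix (Fin m → Fin 2) (Fin m → Fin 2) ℂ)
    (hP : ∀ j, P j = (1 / 2 : ℂ) • (1 + HW (y j).1 (y j).2)) :
    (∀ i j, P i * P j = P j * P i) ∧
    (∀ j, (P j).IsHermitian ∧ P j * P j = P j ∧ (P j).rank = 2 ^ (m - 1)) ∧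
    (∀ ε : Fin m → ℂ, (∀ j, ε j = 1 ∨ ε j = -1) →
      ∀ Q : Matrix (Fin m → Fin 2) (Fin m → Fin 2) ℂ,
        Q = (((List.finRange m).map fun j =>
          (1 / 2 : ℂ) • (1 + ε j • HW (y j).1 (y j).2))).prod →
        Q.IsHermitian ∧ Q * Q = Q ∧ Q.rank = 1) := by
  have hcomm : ∀ i j, HW (y i).1 (y i).2 * HW (y j).1 (y j).2
      = HW (y j).1 (y j).2 * HW (y i).1 (y i).2 := by
    intro i j
    by_cases hij : i = j
    · rw [hij]
    · exact HW_comm _ _ _ _ (hsymp i j hij)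
  have hP' : ∀ j, P j = (1 / 2 : ℂ) • (1 + (1 : ℂ) • HW (y j).1 (y j).2) := by
    intro j; rw [hP, one_smul]
  refine ⟨?_, ?_, ?_⟩
  · intro i j
    rw [hP' i, hP' j]
    exact half_comm _ _ _ _ (hcomm i j)
  · intro j
    have h := half_proj (y j).1 (y j).2 1 (Or.inl rfl)
    rw [← hP' j] at h
    refine ⟨h.1, h.2, ?_⟩
    have hr := rank_of_idem (P j) h.2
    rw [hP j, Matrix.trace_smul, Matrix.trace_add, HW_trace _ (hind.ne_zero j), ← hP j] at hr
    obtain ⟨k, rfl⟩ : ∃ k, m = k + 1 := ⟨m - 1, by have := j.pos; omega⟩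
    have : ((P j).rank : ℂ) = ((2 ^ k : ℕ) : ℂ) := by
      rw [hr]
      simp [pow_succ]
      ring
    exact_mod_cast this
  · rintro ε hε Q rfl
    have h := list_proj (fun j => (1 / 2 : ℂ) • (1 + ε j • HW (y j).1 (y j).2))
      (fun i j => half_comm _ _ _ _ (hcomm i j)) (fun j => (half_proj _ _ _ (hε j)).1)
      (fun j => (half_proj _ _ _ (hε j)).2) (List.finRange m)
    refine ⟨h.1, h.2, ?_⟩
    have hr := rank_of_idem _ h.2
    rw [trace_prod y hind ε _ (List.nodup_finRange m), List.length_finRange, ← mul_pow] at hr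
    have h1 : ((1 / 2 : ℂ) * 2) ^ m = ((1 : ℕ) : ℂ) := by norm_num
    rw [h1] at hr
    exact_mod_cast hr
end

section
/- Let A be a k × 2k matrix over F_2. Then there exists a nonzero vector w ∈ F_2^{2k} with symplectic weight at most ⌈(k+1)/2⌉ such that A·w = 0. (Consequently, the hypotheses of the main construction, which require A·w ∈ Cset_f for all nonzero w of symplectic weight ≤ d−1 and a nonzero Boolean function f, can only be satisfied when d ≤ ⌈(k+3)/2⌉, since the zero vector is never in the complementary set of a nonzero Boolean function.) -/
/-- The symplectic weight of `w = (a, b) ∈ F_2^k × F_2^k`, encoded as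
`w : Fin k ⊕ Fin k → ZMod 2`: the number of indices `i` with `a_i ≠ 0` or `b_i ≠ 0`. -/
def sympWt {k : ℕ} (w : Fin k ⊕ Fin k → ZMod 2) : ℕ :=
  (Finset.univ.filter fun i : Fin k => w (Sum.inl i) ≠ 0 ∨ w (Sum.inr i) ≠ 0).card

/-- for any `k × 2k` matrix `A` over `F_2` (with `k ≥ 1`) there is a
nonzero `w ∈ F_2^{2k}` of symplectic weight at most `⌈(k+1)/2⌉` with `A·w = 0`. -/
theorem exists_low_sympWt_kernel_vector
    (k : ℕ) (hk : 1 ≤ k) (A : Matrix (Fin k) (Fin k ⊕ Fin k) (ZMod 2)) :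
    ∃ w : Fin k ⊕ Fin k → ZMod 2,
      w ≠ 0 ∧ sympWt w ≤ (k + 2) / 2 ∧ A.mulVec w = 0 := by
  obtain ⟨m, hm⟩ : ∃ m, m = (k + 2) / 2 := ⟨_, rfl⟩
  have hmk : m ≤ k := by omega
  let e : Fin m ⊕ Fin m → Fin k ⊕ Fin k := Sum.map (Fin.castLE hmk) (Fin.castLE hmk)
  have he : Function.Injective e :=
    Function.Injective.sumMap (Fin.castLE_injective hmk) (Fin.castLE_injective hmk)
  let L := A.mulVecLin ∘ₗ Function.ExtendByZero.linearMap (ZMod 2) e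
  have hL : LinearMap.ker L ≠ ⊥ := by
    apply LinearMap.ker_ne_bot_of_finrank_lt
    simp only [Module.finrank_fintype_fun_eq_card, Fintype.card_sum, Fintype.card_fin]
    omega
  obtain ⟨v, hv, hv0⟩ := (Submodule.ne_bot_iff _).1 hL
  refine ⟨Function.extend e v 0, ?_, ?_, ?_⟩
  · intro h
    apply hv0
    funext x
    have := congrFun h (e x)
    rwa [he.extend_apply] at this
  · rw [← hm]
    have hsub : (Finset.univ.filter fun i : Fin k =>
        Function.extend e v 0 (Sum.inl i) ≠ 0 ∨ Function.extend e v 0 (Sum.inr i) ≠ 0)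
        ⊆ Finset.univ.image (Fin.castLE hmk) := by
      intro i hi
      simp only [Finset.mem_filter, Finset.mem_univ, true_and] at hi
      by_contra hn
      simp only [Finset.mem_image, Finset.mem_univ, true_and, not_exists] at hn
      rcases hi with hi | hi
      · apply hi
        rw [Function.extend_apply' _ _ _ (by
          rintro ⟨x | x, hx⟩
          · exact hn x (Sum.inl.inj hx)
          · cases hx)]
        rfl
      · apply hi
        rw [Function.extend_apply' _ _ _ (by
          rintro ⟨x | x, hx⟩
          · cases hx
          · exact hn x (Sum.inr.inj hx))]
        rfl
    calc sympWt (Function.extend e v 0) ≤ _ := Finset.card_le_card hsub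
      _ ≤ _ := Finset.card_image_le
      _ = m := by simp
  · exact hv
end
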